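/- Boundary Lipschitz bound in half-balls. For every integer n ≥ 2, reals 0 < λ ≤ Λ, exponents q > n and p with n ≤ p ≤ q, d₀ ∈ (0,1/4], and K > 0, there exists a constant C > 0 such that the following holds. Let b, f : B₂⁺ → ℝ be continuous with b ≥ 0 and ‖b‖_{L^q(B₂⁺)} ≤ K, and let u be continuous on B₂⁺ ∪ B₂⁰ and C² on B₂⁺, with L⁺[u] ≥ −f in B₂⁺ and u ≤ 0 on B₂⁰. Then u(x) ≤ C·( sup_{B_{3/2}⁺} u⁺ + ‖f⁺‖_{L^{p,q}(B₂⁺)} )·x_n for all x ∈ B₁⁺. -/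

import Mathlib

open MeasureTheory
open scoped ENNReal

/-- The Pucci minimal extremal operator `𝓜⁻(M)` with ellipticity constants `lam ≤ Lam`:
the infimum of `tr(A*M)` over symmetric matrices `A` with `lam•I ≤ A ≤ Lam•I`. -/
noncomputable def pucciMinus (n : ℕ) (lam Lam : ℝ) (M : Matrix (Fin n) (Fin n) ℝ) : ℝ :=
  sInf { t : ℝ | ∃ A : Matrix (Fin n) (Fin n) ℝ, A.IsSymm ∧
    (A - lam • (1 : Matrix (Fin n) (Fin n) ℝ)).PosSemidef ∧
    (Lam • (1 : Matrix (Fin n) (Fin n) ℝ) - A).PosSemidef ∧ t = (A * M).trace }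

/-- The Pucci maximal extremal operator `𝓜⁺(M)`. -/
noncomputable def pucciPlus (n : ℕ) (lam Lam : ℝ) (M : Matrix (Fin n) (Fin n) ℝ) : ℝ :=
  sSup { t : ℝ | ∃ A : Matrix (Fin n) (Fin n) ℝ, A.IsSymm ∧
    (A - lam • (1 : Matrix (Fin n) (Fin n) ℝ)).PosSemidef ∧
    (Lam • (1 : Matrix (Fin n) (Fin n) ℝ) - A).PosSemidef ∧ t = (A * M).trace }

/-- The Hessian matrix `D²u(x)` of `u` at `x`. -/
noncomputable def hess (n : ℕ) (u : EuclideanSpace ℝ (Fin n) → ℝ)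
    (x : EuclideanSpace ℝ (Fin n)) : Matrix (Fin n) (Fin n) ℝ :=
  fun i j => fderiv ℝ (fun y => fderiv ℝ u y (EuclideanSpace.single j (1 : ℝ))) x
    (EuclideanSpace.single i (1 : ℝ))

/-- The euclidean norm `|Du(x)|` of the gradient of `u` at `x`. -/
noncomputable def gradNorm (n : ℕ) (u : EuclideanSpace ℝ (Fin n) → ℝ)
    (x : EuclideanSpace ℝ (Fin n)) : ℝ := ‖fderiv ℝ u x‖

/-- The `L^p` norm `(∫_E |g|^p)^(1/p)`, as a Lebesgue integral valued in `[0,∞]`. -/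
noncomputable def LpNormE (n : ℕ) (p : ℝ) (g : EuclideanSpace ℝ (Fin n) → ℝ)
    (E : Set (EuclideanSpace ℝ (Fin n))) : ℝ≥0∞ :=
  (∫⁻ x in E, ENNReal.ofReal (|g x| ^ p)) ^ (1 / p)

/-- The last (`n`-th) coordinate `x_n` of a point of `ℝⁿ`. -/
def lastC (n : ℕ) (hn : 1 ≤ n) (x : EuclideanSpace ℝ (Fin n)) : ℝ := x ⟨n - 1, by omega⟩

/-- The open half-ball `B_R⁺ = {|x| < R, x_n > 0}`. -/
def halfBall (n : ℕ) (hn : 1 ≤ n) (R : ℝ) : Set (EuclideanSpace ℝ (Fin n)) :=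
  {x | ‖x‖ < R ∧ 0 < lastC n hn x}

/-- The flat boundary part `B_R⁰ = {|x| ≤ R, x_n = 0}`. -/
def flatB (n : ℕ) (hn : 1 ≤ n) (R : ℝ) : Set (EuclideanSpace ℝ (Fin n)) :=
  {x | ‖x‖ ≤ R ∧ lastC n hn x = 0}

/-- The norm `‖g‖_{L^{p,q}(B_R⁺)} = ‖g‖_{L^p(B_R⁺)} + ‖g‖_{L^q(B_R⁺ ∩ {x_n < d0})}`. -/
noncomputable def LpqNormHB (n : ℕ) (hn : 1 ≤ n) (p q d0 R : ℝ)
    (g : EuclideanSpace ℝ (Fin n) → ℝ) : ℝ≥0∞ :=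
  LpNormE n p g (halfBall n hn R) +
    LpNormE n q g {x ∈ halfBall n hn R | lastC n hn x < d0}

/-- The open cube `Q_ρ` of side `ρ` centered at `(0,…,0,ρ/2)`. -/
def cubeQ (n : ℕ) (hn : 1 ≤ n) (ρ : ℝ) : Set (EuclideanSpace ℝ (Fin n)) :=
  {x | (∀ i : Fin n, i.1 ≠ n - 1 → |x i| < ρ / 2) ∧ 0 < lastC n hn x ∧ lastC n hn x < ρ}

/-- The norm `‖g‖_{L^{p,q}(Q₂)} = ‖g‖_{L^p(Q₂)} + ‖g‖_{L^q(Q₂ ∩ {x_n < d0})}`. -/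
noncomputable def LpqNormQ (n : ℕ) (hn : 1 ≤ n) (p q d0 : ℝ)
    (g : EuclideanSpace ℝ (Fin n) → ℝ) : ℝ≥0∞ :=
  LpNormE n p g (cubeQ n hn 2) +
    LpNormE n q g {x ∈ cubeQ n hn 2 | lastC n hn x < d0}

lemma amgm_det {n : ℕ} (hn : 1 ≤ n) (H : Matrix (Fin n) (Fin n) ℝ) (hH : (-H).PosSemidef) :
    |H.det| ≤ ((-H.trace) / n) ^ n := by
  have h1 : |H.det| = (-H).det := by
    have h0 := hH.det_nonneg
    rw [← abs_of_nonneg h0, Matrix.det_neg, abs_mul]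
    simp
  rw [h1, ← Matrix.trace_neg, hH.1.det_eq_prod_eigenvalues, hH.1.trace_eq_sum_eigenvalues]
  have hn0 : (n : ℝ) ≠ 0 := by positivity
  have key := Real.geom_mean_le_arith_mean_weighted (Finset.univ : Finset (Fin n))
    (fun _ => (1 : ℝ) / n) hH.1.eigenvalues (fun _ _ => by positivity)
    (by simp [hn0]) (fun i _ => hH.eigenvalues_nonneg i)
  rw [← Finset.mul_sum, Real.finsetProd_rpow _ _ (fun i _ => hH.eigenvalues_nonneg i)] at key
  have hp : 0 ≤ ∏ i, hH.1.eigenvalues i :=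
    Finset.prod_nonneg (fun i _ => hH.eigenvalues_nonneg i)
  have k2 := pow_le_pow_left₀ (Real.rpow_nonneg hp _) key n
  rw [← Real.rpow_natCast, ← Real.rpow_mul hp, one_div_mul_cancel hn0, Real.rpow_one] at k2
  simpa [div_eq_inv_mul] using k2

lemma trace_mul_nonneg' {n : ℕ} {A B : Matrix (Fin n) (Fin n) ℝ} (hA : A.PosSemidef)
    (hB : B.PosSemidef) : 0 ≤ (A * B).trace := by
  obtain ⟨C, rfl⟩ : ∃ C : Matrix (Fin n) (Fin n) ℝ, A = C.conjTranspose * C := by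
    open scoped MatrixOrder in
    exact CStarAlgebra.nonneg_iff_eq_star_mul_self.mp hA.nonneg
  rw [Matrix.mul_assoc, Matrix.trace_mul_comm]
  exact (hB.mul_mul_conjTranspose_same C).trace_nonneg

lemma trace_le {n : ℕ} {lam : ℝ} {A H : Matrix (Fin n) (Fin n) ℝ}
    (hA : (A - lam • (1 : Matrix (Fin n) (Fin n) ℝ)).PosSemidef)
    (hH : (-H).PosSemidef) : (A * H).trace ≤ lam * H.trace := by
  have := trace_mul_nonneg' hA hH
  simp [Matrix.sub_mul, Matrix.trace_sub] at this
  linarith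

lemma hess_eq {n : ℕ} {v : EuclideanSpace ℝ (Fin n) → ℝ} {x : EuclideanSpace ℝ (Fin n)}
    (hv : ContDiffAt ℝ 2 v x) (i j : Fin n) :
    hess n v x i j = fderiv ℝ (fderiv ℝ v) x (EuclideanSpace.single i (1 : ℝ))
      (EuclideanSpace.single j (1 : ℝ)) := by
  have hd : DifferentiableAt ℝ (fderiv ℝ v) x :=
    (hv.fderiv_right (m := 1) (by norm_num)).differentiableAt (by norm_num)
  unfold hess
  rw [fderiv_clm_apply hd (differentiableAt_const _)]
  simp

lemma hess_symm {n : ℕ} {v : EuclideanSpace ℝ (Fin n) → ℝ} {x : EuclideanSpace ℝ (Fin n)}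
    (hv : ContDiffAt ℝ 2 v x) (i j : Fin n) : hess n v x i j = hess n v x j i := by
  rw [hess_eq hv, hess_eq hv]
  exact (hv.isSymmSndFDerivAt (by simp)) _ _

lemma hess_quad {n : ℕ} {v : EuclideanSpace ℝ (Fin n) → ℝ} {x : EuclideanSpace ℝ (Fin n)}
    (hv : ContDiffAt ℝ 2 v x) (ξ : Fin n → ℝ) :
    dotProduct ξ (Matrix.mulVec (hess n v x) ξ) =
      fderiv ℝ (fderiv ℝ v) x (WithLp.toLp 2 ξ) (WithLp.toLp 2 ξ) := by
  have hs : (WithLp.toLp 2 ξ : EuclideanSpace ℝ (Fin n)) =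
      ∑ i, ξ i • EuclideanSpace.single i (1 : ℝ) := by
    ext j
    simp [Finset.sum_apply, Pi.single_apply]
  rw [hs]
  simp only [map_sum, map_smul, sum_apply, smul_apply,
    dotProduct, Matrix.mulVec, hess_eq hv, smul_eq_mul]
  simp only [Finset.mul_sum]
  rw [Finset.sum_comm]
  refine Finset.sum_congr rfl fun i _ => ?_
  refine Finset.sum_congr rfl fun j _ => ?_
  ring

/-- one-dimensional second order necessary condition -/
lemma deriv2_nonpos {φ : ℝ → ℝ} (hm : IsLocalMax φ 0) (hc : ContinuousAt φ 0) :
    deriv (deriv φ) 0 ≤ 0 := by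
  by_contra! h
  have hmin := isLocalMin_of_deriv_deriv_pos h hm.deriv_eq_zero hc
  have he : φ =ᶠ[nhds 0] fun _ => φ 0 := by
    filter_upwards [hm, hmin] with t h1 h2 using le_antisymm h1 h2
  have h2 := he.deriv.deriv_eq
  simp at h2
  linarith

lemma second_order {n : ℕ} {v : EuclideanSpace ℝ (Fin n) → ℝ} {x p : EuclideanSpace ℝ (Fin n)}
    (hv : ContDiffAt ℝ 2 v x) (hm : IsLocalMax (fun y => v y - inner ℝ p y) x) :
    fderiv ℝ v x = InnerProductSpace.toDual ℝ _ p ∧ ∀ ξ, fderiv ℝ (fderiv ℝ v) x ξ ξ ≤ 0 := by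
  have hd : DifferentiableAt ℝ v x := hv.differentiableAt (by norm_num)
  have hl : ∀ y, HasFDerivAt (fun y => inner ℝ p y)
      (InnerProductSpace.toDual ℝ (EuclideanSpace ℝ (Fin n)) p) y := fun y =>
    (InnerProductSpace.toDual ℝ (EuclideanSpace ℝ (Fin n)) p).hasFDerivAt
  refine ⟨?_, fun ξ => ?_⟩
  · have := hm.fderiv_eq_zero
    have h2 : fderiv ℝ (fun y => v y - inner ℝ p y) x = _ :=
      (hd.hasFDerivAt.sub (hl x)).fderiv
    rw [h2] at this
    exact sub_eq_zero.mp this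
  · have hline : ∀ t : ℝ, HasDerivAt (fun t : ℝ => x + t • ξ) ξ t := fun t => by
      simpa using ((hasDerivAt_id t).smul_const ξ).const_add x
    have hc0 : ContinuousAt (fun t : ℝ => x + t • ξ) 0 := (hline 0).continuousAt
    have hx0 : x + (0 : ℝ) • ξ = x := by simp
    have hten : Filter.Tendsto (fun t : ℝ => x + t • ξ) (nhds 0) (nhds x) := by
      have := hc0.tendsto
      rwa [hx0] at this
    set φ : ℝ → ℝ := fun t => v (x + t • ξ) - inner ℝ p (x + t • ξ) with hφ
    have hev : ∀ᶠ y in nhds x, DifferentiableAt ℝ v y := by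
      filter_upwards [hv.eventually (by simp)] with y hy using hy.differentiableAt (by norm_num)
    have hder : deriv φ =ᶠ[nhds 0] fun t => fderiv ℝ v (x + t • ξ) ξ - inner ℝ p ξ := by
      filter_upwards [hten.eventually hev] with t ht
      exact ((ht.hasFDerivAt.comp_hasDerivAt t (hline t)).sub
        ((hl _).comp_hasDerivAt t (hline t))).deriv
    have hd2 : HasFDerivAt (fderiv ℝ v) (fderiv ℝ (fderiv ℝ v) x) (x + (0 : ℝ) • ξ) := by
      rw [hx0]
      exact ((hv.fderiv_right (m := 1) (by norm_num)).differentiableAt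
        (by norm_num)).hasFDerivAt
    have h3 : HasDerivAt (fun t : ℝ => fderiv ℝ v (x + t • ξ) ξ - inner ℝ p ξ)
        (fderiv ℝ (fderiv ℝ v) x ξ ξ) 0 := by
      have h4 := hd2.comp_hasDerivAt (0 : ℝ) (hline 0)
      have h5 := h4.clm_apply (hasDerivAt_const (0 : ℝ) ξ)
      simpa using h5.sub_const (inner ℝ p ξ)
    have h6 : deriv (deriv φ) 0 = fderiv ℝ (fderiv ℝ v) x ξ ξ := by
      rw [hder.deriv_eq, h3.deriv]
    rw [← h6]
    apply deriv2_nonpos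
    · have := hten.eventually hm
      filter_upwards [this] with t ht
      simpa [hφ] using ht
    · have hd' : DifferentiableAt ℝ v (x + (0 : ℝ) • ξ) := by rwa [hx0]
      exact ((hd'.hasFDerivAt.comp_hasDerivAt 0 (hline 0)).sub
        ((hl _).comp_hasDerivAt 0 (hline 0))).continuousAt

/-- Alexandrov-Bakelman-Pucci estimate, measure form. -/
lemma abp {n : ℕ} (hn : 1 ≤ n) {v h : EuclideanSpace ℝ (Fin n) → ℝ}
    {Ω K : Set (EuclideanSpace ℝ (Fin n))} {x₀ : EuclideanSpace ℝ (Fin n)} {d τ : ℝ}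
    (hΩ : IsOpen Ω) (hK : IsCompact K) (hΩK : Ω ⊆ K) (hvK : ContinuousOn v K)
    (hvΩ : ContDiffOn ℝ 2 v Ω) (hb : ∀ x ∈ K, x ∉ Ω → v x ≤ 0) (hx₀ : x₀ ∈ Ω)
    (hd : ∀ y ∈ K, ‖y - x₀‖ ≤ d) (hdτ : d * τ ≤ v x₀) (hd0 : 0 < d)
    (hh : ∀ x ∈ Ω, ‖fderiv ℝ v x‖ < τ → (-(hess n v x)).PosSemidef →
      -(hess n v x).trace ≤ h x) :
    volume (Metric.ball (0 : EuclideanSpace ℝ (Fin n)) τ)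
      ≤ ∫⁻ x in Ω, ENNReal.ofReal ((h x / n) ^ n) := by
  have hcd : ∀ x ∈ Ω, ContDiffAt ℝ 2 v x := fun x hx => hvΩ.contDiffAt (hΩ.mem_nhds hx)
  set D2 := fderiv ℝ (fderiv ℝ v) with hD2
  have hd2 : ∀ x ∈ Ω, HasFDerivAt (fderiv ℝ v) (D2 x) x := fun x hx =>
    (((hcd x hx).fderiv_right (m := 1) (by norm_num)).differentiableAt
      (by norm_num)).hasFDerivAt
  have hc1 : ContinuousOn (fderiv ℝ v) Ω := fun x hx =>
    (hd2 x hx).continuousAt.continuousWithinAt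
  have hc2 : ContinuousOn D2 Ω := fun x hx =>
    (((hcd x hx).fderiv_right (m := 1) (by norm_num)).fderiv_right (m := 0)
      (by norm_num)).continuousAt.continuousWithinAt
  set G : EuclideanSpace ℝ (Fin n) → EuclideanSpace ℝ (Fin n) :=
    fun x => (InnerProductSpace.toDual ℝ (EuclideanSpace ℝ (Fin n))).symm (fderiv ℝ v x) with hG
  set T : (EuclideanSpace ℝ (Fin n) →L[ℝ] ℝ) →L[ℝ] EuclideanSpace ℝ (Fin n) :=
    LinearMap.toContinuousLinearMap
      { toFun := (InnerProductSpace.toDual ℝ (EuclideanSpace ℝ (Fin n))).symm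
        map_add' := fun a b => by simp
        map_smul' := fun a b => by simp } with hT
  set s : Set (EuclideanSpace ℝ (Fin n)) :=
    (Ω ∩ (Ω ∩ fderiv ℝ v ⁻¹' (Metric.ball 0 τ))) \
      (Ω ∩ D2 ⁻¹' {B | ∃ ξ, 0 < B ξ ξ}) with hs
  have hsm : MeasurableSet s := by
    refine (hΩ.measurableSet.inter ?_).diff ?_
    · exact (hc1.isOpen_inter_preimage hΩ Metric.isOpen_ball).measurableSet
    · refine (hc2.isOpen_inter_preimage hΩ ?_).measurableSet
      rw [show {B : EuclideanSpace ℝ (Fin n) →L[ℝ] EuclideanSpace ℝ (Fin n) →L[ℝ] ℝ |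
        ∃ ξ, 0 < B ξ ξ} = ⋃ ξ, {B | 0 < B ξ ξ} by ext; simp]
      refine isOpen_iUnion fun ξ => isOpen_lt continuous_const ?_
      fun_prop
  have hsΩ : s ⊆ Ω := fun x hx => hx.1.1
  have hball : Metric.ball (0 : EuclideanSpace ℝ (Fin n)) τ ⊆ G '' s := by
    intro p hp
    have hp' : ‖p‖ < τ := by simpa using hp
    obtain ⟨y, hyK, hy⟩ := hK.exists_isMaxOn ⟨x₀, hΩK hx₀⟩
      (hvK.sub (f := v) (g := fun y => inner ℝ p y) (by fun_prop))
    have hyx : v x₀ - inner ℝ p x₀ ≤ v y - inner ℝ p y := hy (hΩK hx₀)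
    have hyΩ : y ∈ Ω := by
      by_contra hc
      have h1 := hb y hyK hc
      have h2 : -(inner ℝ p (y - x₀)) ≤ ‖p‖ * ‖y - x₀‖ :=
        (neg_le_abs _).trans (abs_real_inner_le_norm _ _)
      have h3 : ‖p‖ * ‖y - x₀‖ ≤ ‖p‖ * d :=
        mul_le_mul_of_nonneg_left (hd y hyK) (norm_nonneg _)
      rw [inner_sub_right] at h2
      nlinarith
    have hmax : IsLocalMax (fun y => v y - inner ℝ p y) y :=
      (hy.on_subset hΩK).isLocalMax (hΩ.mem_nhds hyΩ)
    obtain ⟨e1, e2⟩ := second_order (hcd y hyΩ) hmax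
    refine ⟨y, ⟨⟨hyΩ, hyΩ, ?_⟩, ?_⟩, ?_⟩
    · simpa [e1] using hp'
    · rintro ⟨-, ξ, hξ⟩
      exact absurd (e2 ξ) (not_le.mpr hξ)
    · simp [hG, e1]
  have hder : ∀ x ∈ s, HasFDerivWithinAt G (T.comp (D2 x)) s x := fun x hx =>
    (T.hasFDerivAt.comp x (hd2 x (hsΩ hx))).hasFDerivWithinAt
  have hdet : ∀ x ∈ Ω, (T.comp (D2 x)).det = (hess n v x).det := by
    intro x hx
    rw [ContinuousLinearMap.det, ← LinearMap.det_toMatrix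
      (EuclideanSpace.basisFun (Fin n) ℝ).toBasis, ← Matrix.det_transpose]
    congr 1
    ext i j
    rw [Matrix.transpose_apply, LinearMap.toMatrix_apply, hess_eq (hcd x hx)]
    have h1 : (InnerProductSpace.toDual ℝ (EuclideanSpace ℝ (Fin n))).symm
        (D2 x (EuclideanSpace.single i 1)) j = D2 x (EuclideanSpace.single i 1)
          (EuclideanSpace.single j 1) := by
      rw [← InnerProductSpace.toDual_symm_apply, EuclideanSpace.inner_single_right]
      simp only [one_mul, conj_trivial]
    simpa [hT] using h1
  calc volume (Metric.ball (0 : EuclideanSpace ℝ (Fin n)) τ) ≤ volume (G '' s) :=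
        measure_mono hball
    _ ≤ ∫⁻ x in s, ENNReal.ofReal |(T.comp (D2 x)).det| :=
        addHaar_image_le_lintegral_abs_det_fderiv volume hsm hder
    _ ≤ ∫⁻ x in s, ENNReal.ofReal ((h x / n) ^ n) := by
        refine setLIntegral_mono' hsm fun x hx => ENNReal.ofReal_le_ofReal ?_
        have hxΩ := hsΩ hx
        have hpsd : (-(hess n v x)).PosSemidef := by
          refine Matrix.PosSemidef.of_dotProduct_mulVec_nonneg ?_ fun ξ => ?_
          · ext i j
            simp [hess_symm (hcd x hxΩ) i j]
          · have h1 := hess_quad (hcd x hxΩ) ξ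
            have h2 : D2 x (WithLp.toLp 2 ξ) (WithLp.toLp 2 ξ) ≤ 0 := by
              by_contra! hc
              exact hx.2 ⟨hxΩ, _, hc⟩
            simp only [Matrix.neg_mulVec, dotProduct_neg, star_trivial, h1]
            linarith
        rw [hdet x hxΩ]
        refine (amgm_det hn _ hpsd).trans ?_
        have ht : 0 ≤ -(hess n v x).trace := by
          rw [← Matrix.trace_neg]; exact hpsd.trace_nonneg
        have := hh x hxΩ (by simpa using hx.1.2.2) hpsd
        gcongr
    _ ≤ ∫⁻ x in Ω, ENNReal.ofReal ((h x / n) ^ n) := lintegral_mono_set hsΩ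

/-- Abbreviation used in the estimates. -/
noncomputable def om (n : ℕ) : ℝ := (volume (Metric.ball (0 : EuclideanSpace ℝ (Fin n)) 1)).toReal

lemma om_pos (n : ℕ) : 0 < om n :=
  ENNReal.toReal_pos (Metric.measure_ball_pos _ _ one_pos).ne' measure_ball_lt_top.ne

lemma om_eq (n : ℕ) : volume (Metric.ball (0 : EuclideanSpace ℝ (Fin n)) 1)
    = ENNReal.ofReal (om n) := (ENNReal.ofReal_toReal measure_ball_lt_top.ne).symm

/-- From the measure form to norms. -/
lemma norm_form {n : ℕ} (hn : 1 ≤ n) {q lam r τ c F K : ℝ} (hq : (n : ℝ) < q) (hlam : 0 < lam)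
    (hr : 0 < r) (hτ : 0 < τ) (hc : 0 ≤ c) (hF : 0 ≤ F) (hK : 0 ≤ K)
    {g b : EuclideanSpace ℝ (Fin n) → ℝ}
    {Ω : Set (EuclideanSpace ℝ (Fin n))} {x₀ : EuclideanSpace ℝ (Fin n)}
    (hΩm : MeasurableSet Ω) (hΩ : Ω ⊆ Metric.ball x₀ r)
    (hg : ContinuousOn g Ω) (hb : ContinuousOn b Ω)
    (hgF : eLpNorm' g q (volume.restrict Ω) ≤ ENNReal.ofReal F)
    (hbK : eLpNorm' b q (volume.restrict Ω) ≤ ENNReal.ofReal K)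
    (hg0 : ∀ x ∈ Ω, 0 ≤ g x) (hb0 : ∀ x ∈ Ω, 0 ≤ b x)
    (hv : volume (Metric.ball (0 : EuclideanSpace ℝ (Fin n)) τ)
      ≤ ∫⁻ x in Ω, ENNReal.ofReal (((g x + (τ + c) * b x) / lam / n) ^ n)) :
    τ ≤ (om n ^ (-(1 / q)) / (n * lam)) * r ^ (1 - n / q) * (F + (τ + c) * K) := by
  have hn0 : (0 : ℝ) < n := by exact_mod_cast hn
  have hn1 : (1 : ℝ) ≤ n := by exact_mod_cast hn
  have hq0 : 0 < q := hn0.trans hq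
  have hω := om_pos n
  set μ := volume.restrict Ω with hμ
  set k : ℝ := 1 / (n * lam) with hk
  have hk0 : 0 < k := by positivity
  set H : EuclideanSpace ℝ (Fin n) → ℝ := k • (g + (τ + c) • b) with hH
  have hgm : AEStronglyMeasurable g μ := hg.aestronglyMeasurable hΩm
  have hbm : AEStronglyMeasurable b μ := hb.aestronglyMeasurable hΩm
  have hHm : AEStronglyMeasurable H μ := (hgm.add (hbm.const_smul _)).const_smul _
  have e1 : ∫⁻ x in Ω, ENNReal.ofReal (((g x + (τ + c) * b x) / lam / n) ^ n)
      = ∫⁻ x in Ω, ‖H x‖ₑ ^ (n : ℝ) := by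
    refine setLIntegral_congr_fun hΩm fun x hx => ?_
    have hpos : 0 ≤ H x := by
      have := hg0 x hx
      have := hb0 x hx
      simp only [hH, Pi.smul_apply, Pi.add_apply, smul_eq_mul]
      positivity
    rw [Real.enorm_eq_ofReal hpos, ENNReal.rpow_natCast, ← ENNReal.ofReal_pow hpos]
    congr 2
    simp only [hH, Pi.smul_apply, Pi.add_apply, smul_eq_mul, hk]
    field_simp
  have e2 : eLpNorm' H q μ ≤ ENNReal.ofReal (k * (F + (τ + c) * K)) := by
    rw [hH, eLpNorm'_const_smul _ hq0, Real.enorm_eq_ofReal hk0.le, ENNReal.ofReal_mul hk0.le]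
    gcongr
    refine (eLpNorm'_add_le hgm (hbm.const_smul _) (by linarith)).trans ?_
    rw [eLpNorm'_const_smul _ hq0, Real.enorm_eq_ofReal (by positivity),
      ENNReal.ofReal_add hF (by positivity), ENNReal.ofReal_mul (by positivity)]
    gcongr
  have hexp : 0 ≤ 1 / (n : ℝ) - 1 / q := by
    rw [sub_nonneg]
    exact one_div_le_one_div_of_le hn0 hq.le
  have e3 : μ Set.univ ^ (1 / (n : ℝ) - 1 / q) ≤
      ENNReal.ofReal ((r ^ n * om n) ^ (1 / (n : ℝ) - 1 / q)) := by
    rw [← ENNReal.ofReal_rpow_of_nonneg (by positivity) hexp]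
    refine ENNReal.rpow_le_rpow ?_ hexp
    rw [hμ, Measure.restrict_apply_univ]
    refine (measure_mono hΩ).trans ?_
    rw [Measure.addHaar_ball_of_pos _ _ hr, om_eq, ENNReal.ofReal_mul (by positivity)]
    simp
  have e4 := (eLpNorm'_le_eLpNorm'_mul_rpow_measure_univ hn0 hq.le hHm).trans
    (mul_le_mul' e2 e3)
  rw [← ENNReal.ofReal_mul (by positivity)] at e4
  have e5 : ENNReal.ofReal (τ * om n ^ (1 / (n : ℝ))) ≤ eLpNorm' H n μ := by
    rw [eLpNorm'_eq_lintegral_enorm, hμ, ← e1]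
    refine le_trans ?_ (ENNReal.rpow_le_rpow hv (by positivity))
    rw [Measure.addHaar_ball_of_pos _ _ hτ, om_eq, ← ENNReal.ofReal_mul (by positivity),
      ENNReal.ofReal_rpow_of_nonneg (by positivity) (by positivity)]
    refine ENNReal.ofReal_le_ofReal ?_
    rw [Real.mul_rpow (by positivity) (by positivity)]
    simp only [finrank_euclideanSpace, Fintype.card_fin]
    rw [← Real.rpow_natCast τ n, ← Real.rpow_mul hτ.le, mul_one_div_cancel hn0.ne',
      Real.rpow_one]
  have e6 := (ENNReal.ofReal_le_ofReal_iff (by positivity)).mp (e5.trans e4)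
  rw [Real.mul_rpow (by positivity) (by positivity), ← Real.rpow_natCast r n,
    ← Real.rpow_mul hr.le, show (n : ℝ) * (1 / n - 1 / q) = 1 - n / q by field_simp,
    sub_eq_add_neg (1 / (n : ℝ)), Real.rpow_add hω] at e6
  have hp : 0 < om n ^ (1 / (n : ℝ)) := by positivity
  refine le_of_mul_le_mul_right (e6.trans (le_of_eq ?_)) hp
  rw [hk]
  ring

/-- The quadratic barrier. -/
noncomputable def barr {n : ℕ} (i : Fin n) (x₀ : EuclideanSpace ℝ (Fin n)) (a s r B : ℝ) :
    EuclideanSpace ℝ (Fin n) → ℝ :=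
  fun x => a * x i + s * (‖x - x₀‖ ^ 2 / r - B / r * x i ^ 2 + B * x i)

lemma barr_hasFDerivAt {n : ℕ} (i : Fin n) (x₀ : EuclideanSpace ℝ (Fin n)) (a s r B : ℝ)
    (y : EuclideanSpace ℝ (Fin n)) :
    HasFDerivAt (barr i x₀ a s r B)
      ((s * (2 / r)) • innerSL ℝ (y - x₀) +
        (a + s * (B - 2 * (B / r) * y i)) • EuclideanSpace.proj (𝕜 := ℝ) i) y := by
  have h1 : HasFDerivAt (fun y : EuclideanSpace ℝ (Fin n) => y i)
      (EuclideanSpace.proj (𝕜 := ℝ) i) y := (EuclideanSpace.proj (𝕜 := ℝ) i).hasFDerivAt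
  have h2 : HasFDerivAt (fun y : EuclideanSpace ℝ (Fin n) => ‖y - x₀‖ ^ 2)
      (2 • (innerSL ℝ (y - x₀)).comp (ContinuousLinearMap.id ℝ _)) y :=
    ((hasFDerivAt_id y).sub_const x₀).norm_sq
  have h3 := (h1.const_mul a).add
    ((((h2.mul_const r⁻¹).sub ((h1.pow 2).const_mul (B / r))).add (h1.const_mul B)).const_mul s)
  refine HasFDerivAt.congr_fderiv (f := barr i x₀ a s r B) h3 ?_
  ext ξ
  simp
  ring

lemma barr_contDiff {n : ℕ} (i : Fin n) (x₀ : EuclideanSpace ℝ (Fin n)) (a s r B : ℝ) :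
    ContDiff ℝ 2 (barr i x₀ a s r B) := by
  have h1 : ContDiff ℝ 2 (fun y : EuclideanSpace ℝ (Fin n) => y i) :=
    (EuclideanSpace.proj (𝕜 := ℝ) i).contDiff
  have h2 : ContDiff ℝ 2 (fun y : EuclideanSpace ℝ (Fin n) => ‖y - x₀‖ ^ 2) :=
    (contDiff_id.sub contDiff_const).norm_sq ℝ
  exact (contDiff_const.mul h1).add (contDiff_const.mul
    (((h2.div_const r).sub (contDiff_const.mul (h1.pow 2))).add (contDiff_const.mul h1)))

lemma barr_hess {n : ℕ} (i : Fin n) (x₀ : EuclideanSpace ℝ (Fin n)) (a s r B : ℝ)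
    (y : EuclideanSpace ℝ (Fin n)) :
    hess n (barr i x₀ a s r B) y = (s * (2 / r)) • ((1 : Matrix (Fin n) (Fin n) ℝ)
      - B • Matrix.single i i 1) := by
  ext k j
  have h0 : (fun y => fderiv ℝ (barr i x₀ a s r B) y (EuclideanSpace.single j (1 : ℝ)))
      = fun y => (s * (2 / r)) * (y j - x₀ j) +
        (a + s * (B - 2 * (B / r) * y i)) * (if i = j then 1 else 0) := by
    ext y
    rw [(barr_hasFDerivAt i x₀ a s r B y).fderiv]
    simp [EuclideanSpace.inner_single_right, Pi.single_apply]
  have h1 : ∀ i, HasFDerivAt (fun y : EuclideanSpace ℝ (Fin n) => y i)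
      (EuclideanSpace.proj (𝕜 := ℝ) i) y := fun i =>
    (EuclideanSpace.proj (𝕜 := ℝ) i).hasFDerivAt
  have h3 := (((h1 j).sub_const (x₀ j)).const_mul (s * (2 / r))).add
    ((((((h1 i).const_mul (2 * (B / r))).const_sub B).const_mul s).const_add a).mul_const
      (if i = j then (1 : ℝ) else 0))
  unfold hess
  rw [h0]
  have h4 := h3.fderiv
  refine (congrArg (fun T : EuclideanSpace ℝ (Fin n) →L[ℝ] ℝ =>
    T (EuclideanSpace.single k (1 : ℝ))) h4).trans ?_
  simp only [Matrix.smul_apply, Matrix.sub_apply, Matrix.one_apply, Matrix.single_apply]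
  clear h0 h1 h3 h4
  by_cases hij : i = j <;> by_cases hik : i = k <;> by_cases hkj : k = j <;>
    simp_all [Pi.single_apply, eq_comm] <;> ring

lemma pucci_le {n : ℕ} (hn : 1 ≤ n) {lam Lam t : ℝ} (hlam : 0 < lam) (hLam : lam ≤ Lam)
    (ht : 0 ≤ t) (i : Fin n) {H : Matrix (Fin n) (Fin n) ℝ} (hH : (-H).PosSemidef) :
    pucciPlus n lam Lam (H + t • ((1 : Matrix (Fin n) (Fin n) ℝ)
      - (n * Lam / lam) • Matrix.single i i 1)) ≤ lam * H.trace := by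
  unfold pucciPlus
  apply csSup_le
  · refine ⟨_, lam • (1 : Matrix (Fin n) (Fin n) ℝ), ?_, ?_, ?_, rfl⟩
    · simp [Matrix.IsSymm]
    · simpa using Matrix.PosSemidef.zero
    · rw [← sub_smul]
      exact Matrix.PosSemidef.one.smul (sub_nonneg.mpr hLam)
  · rintro _ ⟨A, -, hA1, hA2, rfl⟩
    have h1 := trace_le hA1 hH
    have h2 : lam ≤ A i i := by
      have := hA1.diag_nonneg (i := i)
      simpa using this
    have h3 : A.trace ≤ n * Lam := by
      have := hA2.trace_nonneg
      simp [Matrix.trace_sub] at this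
      linarith
    have h4 : (A * Matrix.single i i (1 : ℝ)).trace = A i i := by
      simp [Matrix.trace_mul_single]
    rw [Matrix.mul_add, Matrix.trace_add, Matrix.mul_smul, Matrix.trace_smul, Matrix.mul_sub,
      Matrix.trace_sub, Matrix.mul_one, Matrix.mul_smul, Matrix.trace_smul, h4, smul_eq_mul,
      smul_eq_mul]
    have h5 : n * Lam ≤ n * Lam / lam * A i i := by
      have : n * Lam = n * Lam / lam * lam := by field_simp
      have h6 : 0 ≤ n * Lam / lam := by
        have : 0 < Lam := hlam.trans_le hLam
        positivity
      nlinarith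
    nlinarith [mul_nonneg ht (sub_nonneg.mpr (h3.trans h5))]

lemma hess_sub {n : ℕ} {u w : EuclideanSpace ℝ (Fin n) → ℝ} {x : EuclideanSpace ℝ (Fin n)}
    (hu : ContDiffAt ℝ 2 u x) (hw : ContDiffAt ℝ 2 w x) :
    hess n (fun y => u y - w y) x = hess n u x - hess n w x := by
  ext k j
  have h0 : fderiv ℝ (fun y => u y - w y) =ᶠ[nhds x] fun y => fderiv ℝ u y - fderiv ℝ w y := by
    filter_upwards [hu.eventually (by simp), hw.eventually (by simp)] with y h1 h2
    exact fderiv_fun_sub (h1.differentiableAt (by norm_num)) (h2.differentiableAt (by norm_num))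
  rw [hess_eq (hu.sub hw), Matrix.sub_apply, hess_eq hu, hess_eq hw, h0.fderiv_eq,
    fderiv_fun_sub]
  · simp
  · exact (hu.fderiv_right (m := 1) (by norm_num)).differentiableAt (by norm_num)
  · exact (hw.fderiv_right (m := 1) (by norm_num)).differentiableAt (by norm_num)

lemma coord_le {n : ℕ} (i : Fin n) (y : EuclideanSpace ℝ (Fin n)) : |y i| ≤ ‖y‖ := by
  simpa using PiLp.norm_apply_le y i

lemma barr_grad {n : ℕ} {i : Fin n} {x₀ y : EuclideanSpace ℝ (Fin n)} {a s r B : ℝ}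
    (ha : 0 ≤ a) (hs : 0 ≤ s) (hr : 0 < r) (hB : 0 ≤ B) (hx₀ : x₀ i = 0) (hy : ‖y - x₀‖ ≤ r) :
    ‖fderiv ℝ (barr i x₀ a s r B) y‖ ≤ a + (2 + 3 * B) * s := by
  rw [(barr_hasFDerivAt i x₀ a s r B y).fderiv]
  refine (norm_add_le _ _).trans ?_
  rw [norm_smul, norm_smul, innerSL_apply_norm]
  have hP : ‖(EuclideanSpace.proj (𝕜 := ℝ) i : EuclideanSpace ℝ (Fin n) →L[ℝ] ℝ)‖ ≤ 1 :=
    ContinuousLinearMap.opNorm_le_bound _ zero_le_one fun z => by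
      simpa using coord_le i z
  have hyi : |y i| ≤ r := by
    have := coord_le i (y - x₀)
    simp [hx₀] at this
    linarith
  have h1 : ‖s * (2 / r)‖ * ‖y - x₀‖ ≤ 2 * s := by
    rw [Real.norm_of_nonneg (by positivity)]
    calc s * (2 / r) * ‖y - x₀‖ ≤ s * (2 / r) * r := by gcongr
      _ = 2 * s := by field_simp
  have h2 : ‖a + s * (B - 2 * (B / r) * y i)‖ ≤ a + s * (B + 2 * B) := by
    have h3 : |2 * (B / r) * y i| ≤ 2 * B := by
      rw [abs_mul, abs_of_nonneg (by positivity)]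
      calc 2 * (B / r) * |y i| ≤ 2 * (B / r) * r := by gcongr
        _ = 2 * B := by field_simp
    have h3' := abs_le.mp h3
    rw [Real.norm_eq_abs, abs_le]
    constructor <;> nlinarith [mul_le_mul_of_nonneg_left h3'.1 hs,
      mul_le_mul_of_nonneg_left h3'.2 hs, mul_nonneg hs hB]
  have h4 : ‖a + s * (B - 2 * (B / r) * y i)‖ *
      ‖(EuclideanSpace.proj (𝕜 := ℝ) i : EuclideanSpace ℝ (Fin n) →L[ℝ] ℝ)‖
      ≤ (a + s * (B + 2 * B)) * 1 := by gcongr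
  linarith

/-- One step of the iteration. -/
lemma step {n : ℕ} (hn : 1 ≤ n) (i : Fin n) {lam Lam q r a s F K C₁ B : ℝ}
    (hlam : 0 < lam) (hLam : lam ≤ Lam) (hq : (n : ℝ) < q) (hr : 0 < r) (ha : 0 ≤ a) (hs : 0 ≤ s)
    (hF : 0 ≤ F) (hK : 0 ≤ K) (hC₁ : C₁ = om n ^ (-(1 / q)) / (n * lam))
    (hB : B = n * Lam / lam)
    {x₀ : EuclideanSpace ℝ (Fin n)} (hx₀ : x₀ i = 0)
    {Ω Kc : Set (EuclideanSpace ℝ (Fin n))} (hΩ : Ω = {x | ‖x - x₀‖ < r ∧ 0 < x i})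
    (hKc : Kc = {x | ‖x - x₀‖ ≤ r ∧ 0 ≤ x i})
    {b f u : EuclideanSpace ℝ (Fin n) → ℝ}
    (hb : ContinuousOn b Ω) (hf : ContinuousOn f Ω) (hb0 : ∀ x ∈ Ω, 0 ≤ b x)
    (hfF : eLpNorm' (fun y => max (f y) 0) q (volume.restrict Ω) ≤ ENNReal.ofReal F)
    (hbK : eLpNorm' b q (volume.restrict Ω) ≤ ENNReal.ofReal K)
    (huc : ContinuousOn u Kc) (hu2 : ContDiffOn ℝ 2 u Ω)
    (hpde : ∀ x ∈ Ω, -f x ≤ pucciPlus n lam Lam (hess n u x) + b x * gradNorm n u x)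
    (hu0 : ∀ x ∈ Kc, x i = 0 → u x ≤ 0)
    (hule : ∀ x ∈ Kc, u x ≤ a * x i + s * r)
    (hsmall : C₁ * r ^ (1 - n / q) * K ≤ 1 / 2) :
    ∀ x, ‖x - x₀‖ ≤ r / 2 → 0 ≤ x i → u x ≤ (a + B * s) * x i + s * r / 4
      + 4 * (C₁ * r ^ (1 - n / q)) * r * (F + (a + (2 + 3 * B) * s) * K) := by
  intro x hx hxi
  have hn0 : (0 : ℝ) < n := by exact_mod_cast hn
  have hn1 : (1 : ℝ) ≤ n := by exact_mod_cast hn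
  have hLam0 : 0 < Lam := hlam.trans_le hLam
  have hω := om_pos n
  have hB0 : 0 ≤ B := by rw [hB]; positivity
  have hC0 : 0 ≤ C₁ := by rw [hC₁]; positivity
  set X := C₁ * r ^ (1 - n / q) with hX
  have hX0 : 0 ≤ X := by positivity
  set c := a + (2 + 3 * B) * s with hc
  have hc0 : 0 ≤ c := by positivity
  have hxK : x ∈ Kc := by
    rw [hKc]; exact ⟨by linarith, hxi⟩
  have herr : 0 ≤ 4 * X * r * (F + c * K) := by positivity
  rcases hxi.eq_or_lt with h0 | hpos
  · have := hu0 x hxK h0.symm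
    have h2 : 0 ≤ (a + B * s) * x i + s * r / 4 := by positivity
    linarith
  have hxΩ : x ∈ Ω := by
    rw [hΩ]; exact ⟨by linarith, hpos⟩
  set w := barr i x₀ a s r B with hw
  have hwc : ContDiff ℝ 2 w := barr_contDiff i x₀ a s r B
  have hwx : w x ≤ (a + B * s) * x i + s * r / 4 := by
    have h1 : ‖x - x₀‖ ^ 2 / r ≤ r / 4 := by
      rw [div_le_iff₀ hr]
      nlinarith [norm_nonneg (x - x₀)]
    have h2 : 0 ≤ B / r * x i ^ 2 := by positivity
    have h3 := mul_le_mul_of_nonneg_left h1 hs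
    have h4 := mul_nonneg hs h2
    simp only [hw, barr]
    nlinarith
  by_contra! hcon
  have hvpos : 4 * X * r * (F + c * K) < u x - w x := by linarith
  set τ := (u x - w x) / (2 * r) with hτ
  have hτ0 : 0 < τ := by
    have : 0 < u x - w x := by linarith
    positivity
  have hτe : 2 * r * τ = u x - w x := by rw [hτ]; field_simp
  have hΩo : IsOpen Ω := by
    rw [hΩ]
    exact (isOpen_lt (continuous_id.sub continuous_const).norm continuous_const).inter
      (isOpen_lt continuous_const (EuclideanSpace.proj (𝕜 := ℝ) i).continuous)
  have hKcc : IsCompact Kc := by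
    rw [hKc]
    refine (isCompact_closedBall x₀ r).of_isClosed_subset ?_ ?_
    · exact (isClosed_le (continuous_id.sub continuous_const).norm continuous_const).inter
        (isClosed_le continuous_const (EuclideanSpace.proj (𝕜 := ℝ) i).continuous)
    · intro y hy
      rw [Metric.mem_closedBall, dist_eq_norm]
      exact hy.1
  have hΩK : Ω ⊆ Kc := by
    rw [hΩ, hKc]
    exact fun y hy => ⟨hy.1.le, hy.2.le⟩
  have key := abp hn (v := fun y => u y - w y)
    (h := fun y => (max (f y) 0 + (τ + c) * b y) / lam) (d := 2 * r) (τ := τ) hΩo hKcc hΩK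
    (huc.sub hwc.continuous.continuousOn) (hu2.sub hwc.contDiffOn) ?_ hxΩ ?_ hτe.le
    (by positivity) ?_
  · have hres := norm_form hn (x₀ := x₀) hq hlam hr hτ0 hc0 hF hK hΩo.measurableSet ?_
      (ContinuousOn.sup hf continuousOn_const) hb hfF hbK (fun _ _ => le_max_right _ _) hb0 key
    · rw [← hC₁, ← hX] at hres
      have h1 : τ * (X * K) ≤ τ * (1 / 2) := mul_le_mul_of_nonneg_left hsmall hτ0.le
      have h2 : τ ≤ 2 * X * (F + c * K) := by nlinarith
      have h3 : 2 * r * τ ≤ 2 * r * (2 * X * (F + c * K)) :=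
        mul_le_mul_of_nonneg_left h2 (by positivity)
      nlinarith
    · intro y hy
      rw [hΩ] at hy
      rw [Metric.mem_ball, dist_eq_norm]
      exact hy.1
  · intro y hy hyΩ
    have hy' := hy
    rw [hKc] at hy'
    obtain ⟨hy1, hy2⟩ := hy'
    have hyi : y i ≤ r := by
      have := coord_le i (y - x₀)
      simp [hx₀] at this
      linarith [le_abs_self (y i)]
    have h5 : 0 ≤ B / r * (y i * (r - y i)) :=
      mul_nonneg (by positivity) (mul_nonneg hy2 (by linarith))
    have h6 : B / r * (y i * (r - y i)) = B * y i - B / r * y i ^ 2 := by field_simp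
    have hwe : w y = a * y i + s * (‖y - x₀‖ ^ 2 / r + B / r * (y i * (r - y i))) := by
      rw [h6]; simp only [hw, barr]; ring
    rcases hy2.eq_or_lt with h0 | hpos'
    · have h7 := hu0 y hy h0.symm
      have h8 : 0 ≤ w y := by
        rw [hwe]; positivity
      linarith
    · have h9 : ‖y - x₀‖ = r := by
        refine le_antisymm hy1 (not_lt.mp fun hlt => hyΩ ?_)
        rw [hΩ]
        exact ⟨hlt, hpos'⟩
      have h10 := hule y hy
      have h11 : r ^ 2 / r = r := by field_simp
      rw [h9, h11] at hwe
      have := mul_nonneg hs h5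
      linarith
  · intro y hy
    rw [hKc] at hy
    have : y - x = (y - x₀) - (x - x₀) := by abel
    rw [this]
    refine (norm_sub_le _ _).trans ?_
    linarith [hy.1]
  · intro y hy hgr hpsd
    have huy : ContDiffAt ℝ 2 u y := hu2.contDiffAt (hΩo.mem_nhds hy)
    have hwy : ContDiffAt ℝ 2 w y := hwc.contDiffAt
    have hH : hess n u y = hess n (fun y => u y - w y) y +
        (s * (2 / r)) • ((1 : Matrix (Fin n) (Fin n) ℝ)
          - (n * Lam / lam) • Matrix.single i i 1) := by
      rw [hess_sub huy hwy, hw, barr_hess, ← hB]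
      abel
    have h1 := hpde y hy
    have h2 := pucci_le hn hlam hLam (t := s * (2 / r)) (by positivity) i hpsd
    rw [← hH] at h2
    have hg : gradNorm n u y ≤ τ + c := by
      have h3 : fderiv ℝ u y = fderiv ℝ (fun y => u y - w y) y + fderiv ℝ w y := by
        rw [fderiv_fun_sub (huy.differentiableAt (by norm_num))
          (hwy.differentiableAt (by norm_num))]
        abel
      have h4 : ‖fderiv ℝ w y‖ ≤ c := by
        rw [hΩ] at hy
        exact barr_grad ha hs hr hB0 hx₀ hy.1.le
      unfold gradNorm
      rw [h3]
      exact (norm_add_le _ _).trans (by linarith)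
    have h5 : b y * gradNorm n u y ≤ b y * (τ + c) := mul_le_mul_of_nonneg_left hg (hb0 y hy)
    rw [le_div_iff₀ hlam]
    have := le_max_left (f y) 0
    linarith

/-- The iteration. -/
lemma iter {n : ℕ} (hn : 1 ≤ n) (i : Fin n) {lam Lam q r₀ F K C₁ B γ σ D : ℝ}
    (hlam : 0 < lam) (hLam : lam ≤ Lam) (hq : (n : ℝ) < q) (hr₀ : 0 < r₀)
    (hF : 0 ≤ F) (hK : 0 ≤ K) (hC₁ : C₁ = om n ^ (-(1 / q)) / (n * lam))
    (hB : B = n * Lam / lam) (hγ1 : γ < 1) (hγ2 : 3 / 4 ≤ γ)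
    (hγ3 : (1 / 2 : ℝ) ^ (1 - n / q) ≤ γ) (hD : D = B / (1 - γ) + (2 + 3 * B))
    (hsm : 8 * C₁ * (1 + D * K) * r₀ ^ (1 - n / q) ≤ 1 / 4) (hFσ : F ≤ σ)
    {x₀ : EuclideanSpace ℝ (Fin n)} (hx₀ : x₀ i = 0)
    {Ω Kc : Set (EuclideanSpace ℝ (Fin n))} (hΩ : Ω = {x | ‖x - x₀‖ < r₀ ∧ 0 < x i})
    (hKc : Kc = {x | ‖x - x₀‖ ≤ r₀ ∧ 0 ≤ x i})
    {b f u : EuclideanSpace ℝ (Fin n) → ℝ}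
    (hb : ContinuousOn b Ω) (hf : ContinuousOn f Ω) (hb0 : ∀ x ∈ Ω, 0 ≤ b x)
    (hfF : eLpNorm' (fun y => max (f y) 0) q (volume.restrict Ω) ≤ ENNReal.ofReal F)
    (hbK : eLpNorm' b q (volume.restrict Ω) ≤ ENNReal.ofReal K)
    (huc : ContinuousOn u Kc) (hu2 : ContDiffOn ℝ 2 u Ω)
    (hpde : ∀ x ∈ Ω, -f x ≤ pucciPlus n lam Lam (hess n u x) + b x * gradNorm n u x)
    (hu0 : ∀ x ∈ Kc, x i = 0 → u x ≤ 0)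
    (hule : ∀ x ∈ Kc, u x ≤ σ * r₀) (k : ℕ) :
    ∀ x, ‖x - x₀‖ ≤ r₀ * (1 / 2) ^ k → 0 ≤ x i →
      u x ≤ (B * σ * ∑ j ∈ Finset.range k, γ ^ j) * x i + σ * γ ^ k * (r₀ * (1 / 2) ^ k) := by
  have hn0 : (0 : ℝ) < n := by exact_mod_cast hn
  have hq0 : 0 < q := hn0.trans hq
  have hLam0 : 0 < Lam := hlam.trans_le hLam
  have hω := om_pos n
  have hB0 : 0 ≤ B := by rw [hB]; positivity
  have hC0 : 0 ≤ C₁ := by rw [hC₁]; positivity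
  have hσ : 0 ≤ σ := hF.trans hFσ
  have hγ0 : 0 < γ := by linarith
  have h1γ : 0 < 1 - γ := by linarith
  have hBγ : 0 ≤ B / (1 - γ) := by positivity
  have hD2 : 2 ≤ D := by linarith
  have hα : 0 < 1 - n / q := by
    rw [sub_pos, div_lt_one hq0]; exact hq
  set α := 1 - n / q with hαdef
  induction k with
  | zero =>
    intro x hx hxi
    have := hule x (by rw [hKc]; exact ⟨by simpa using hx, hxi⟩)
    simpa using this
  | succ k ih =>
    set r := r₀ * (1 / 2) ^ k with hr
    set a := B * σ * ∑ j ∈ Finset.range k, γ ^ j with ha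
    have hr0 : 0 < r := by positivity
    have hrr : r ≤ r₀ := by
      have : (1 / 2 : ℝ) ^ k ≤ 1 := pow_le_one₀ (by norm_num) (by norm_num)
      nlinarith
    have hγk : γ ^ k ≤ 1 := pow_le_one₀ hγ0.le hγ1.le
    have ha0 : 0 ≤ a := by positivity
    have hgeom : ∑ j ∈ Finset.range k, γ ^ j ≤ 1 / (1 - γ) := by
      rw [geom_sum_eq hγ1.ne, ← neg_div_neg_eq]
      have : 0 ≤ γ ^ k := by positivity
      gcongr <;> linarith
    have haA : a ≤ B / (1 - γ) * σ := by
      calc a ≤ B * σ * (1 / (1 - γ)) := by rw [ha]; gcongr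
        _ = _ := by ring
    have hrα : r ^ α ≤ r₀ ^ α * γ ^ k := by
      rw [hr, Real.mul_rpow hr₀.le (by positivity), ← Real.rpow_natCast_mul (by norm_num),
        mul_comm (k : ℝ), Real.rpow_mul_natCast (by norm_num)]
      gcongr
    have hrα' : r ^ α ≤ r₀ ^ α := by gcongr
    have hsub : {x : EuclideanSpace ℝ (Fin n) | ‖x - x₀‖ < r ∧ 0 < x i} ⊆ Ω := by
      rw [hΩ]; exact fun x hx => ⟨hx.1.trans_le hrr, hx.2⟩
    have hsubK : {x : EuclideanSpace ℝ (Fin n) | ‖x - x₀‖ ≤ r ∧ 0 ≤ x i} ⊆ Kc := by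
      rw [hKc]; exact fun x hx => ⟨hx.1.trans hrr, hx.2⟩
    have hst := step hn i (a := a) (s := σ * γ ^ k) (F := F) (K := K) hlam hLam hq hr0 ha0
      (by positivity) hF hK hC₁ hB hx₀ rfl rfl (hb.mono hsub) (hf.mono hsub)
      (fun x hx => hb0 x (hsub hx))
      ((eLpNorm'_mono_measure _ (Measure.restrict_mono hsub le_rfl) hq0.le).trans hfF)
      ((eLpNorm'_mono_measure _ (Measure.restrict_mono hsub le_rfl) hq0.le).trans hbK)
      (huc.mono hsubK) (hu2.mono hsub) (fun x hx => hpde x (hsub hx))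
      (fun x hx => hu0 x (hsubK hx)) (fun x hx => ih x hx.1 hx.2) ?_
    · intro x hx hxi
      have hx' : ‖x - x₀‖ ≤ r / 2 := by
        rw [hr]; rw [pow_succ] at hx; linarith
      have h1 := hst x hx' hxi
      have hcK : F + (a + (2 + 3 * B) * (σ * γ ^ k)) * K ≤ σ * (1 + D * K) := by
        have h2 : a + (2 + 3 * B) * (σ * γ ^ k) ≤ D * σ := by
          have h3 : σ * γ ^ k ≤ σ := mul_le_of_le_one_right hσ hγk
          have h4 : (2 + 3 * B) * (σ * γ ^ k) ≤ (2 + 3 * B) * σ := by gcongr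
          rw [hD]; linarith
        have h5 := mul_le_mul_of_nonneg_right h2 hK
        linarith
      have herr : 4 * (C₁ * r ^ α) * r * (F + (a + (2 + 3 * B) * (σ * γ ^ k)) * K)
          ≤ σ * γ ^ k * r / 8 := by
        calc 4 * (C₁ * r ^ α) * r * (F + (a + (2 + 3 * B) * (σ * γ ^ k)) * K)
            ≤ 4 * (C₁ * (r₀ ^ α * γ ^ k)) * r * (σ * (1 + D * K)) := by
              gcongr
          _ = (8 * C₁ * (1 + D * K) * r₀ ^ α) * (σ * γ ^ k * r / 2) := by ring
          _ ≤ (1 / 4) * (σ * γ ^ k * r / 2) := by gcongr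
          _ = σ * γ ^ k * r / 8 := by ring
      have hfin : σ * γ ^ k * r / 4 + σ * γ ^ k * r / 8 ≤ σ * γ ^ (k + 1) * (r₀ * (1 / 2) ^ (k + 1)) := by
        have h6 : σ * γ ^ (k + 1) * (r₀ * (1 / 2) ^ (k + 1)) = (σ * γ ^ k * r) * (γ / 2) := by
          rw [hr]; ring
        have h7 : 0 ≤ σ * γ ^ k * r := by positivity
        rw [h6]
        nlinarith
      have hA : a + B * (σ * γ ^ k) = B * σ * ∑ j ∈ Finset.range (k + 1), γ ^ j := by
        rw [Finset.sum_range_succ, ha]; ring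
      rw [hA] at h1
      linarith
    · have h1 : C₁ * r ^ α * K ≤ C₁ * r₀ ^ α * K := by gcongr
      have h2 : 0 ≤ C₁ * r₀ ^ α := by positivity
      have h3 : C₁ * r₀ ^ α * K * 2 ≤ C₁ * r₀ ^ α * K * D :=
        mul_le_mul_of_nonneg_left hD2 (by positivity)
      have h4 : 0 ≤ C₁ * r₀ ^ α * K := by positivity
      have h5 : 8 * C₁ * (1 + D * K) * r₀ ^ α
          = 8 * (C₁ * r₀ ^ α) + 8 * (C₁ * r₀ ^ α * K * D) := by ring
      rw [h5] at hsm
      linarith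

lemma LpNormE_eq {n : ℕ} {q : ℝ} (hq : 0 ≤ q) (g : EuclideanSpace ℝ (Fin n) → ℝ)
    (E : Set (EuclideanSpace ℝ (Fin n))) :
    LpNormE n q g E = eLpNorm' g q (volume.restrict E) := by
  rw [LpNormE, eLpNorm'_eq_lintegral_enorm]
  congr 2
  ext x
  rw [← ENNReal.ofReal_rpow_of_nonneg (abs_nonneg _) hq, Real.enorm_eq_ofReal_abs]

set_option maxHeartbeats 1000000 in
/-- Boundary Lipschitz bound in half-balls. -/
theorem boundary_lipschitz_bound_half_ball
    (n : ℕ) (hn : 2 ≤ n) (lam Lam : ℝ) (hlam : 0 < lam) (hLam : lam ≤ Lam)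
    (p q d0 K : ℝ) (hq : (n : ℝ) < q) (hp : (n : ℝ) ≤ p) (hpq : p ≤ q)
    (hd0 : 0 < d0) (hd0' : d0 ≤ 1 / 4) (hK : 0 < K) :
    ∃ C : ℝ, 0 < C ∧
      ∀ b f u : EuclideanSpace ℝ (Fin n) → ℝ,
        ContinuousOn b (halfBall n (by omega) 2) →
        ContinuousOn f (halfBall n (by omega) 2) →
        (∀ x ∈ halfBall n (by omega) 2, 0 ≤ b x) →
        LpNormE n q b (halfBall n (by omega) 2) ≤ ENNReal.ofReal K →
        ContinuousOn u (halfBall n (by omega) 2 ∪ flatB n (by omega) 2) →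
        ContDiffOn ℝ 2 u (halfBall n (by omega) 2) →
        (∀ x ∈ halfBall n (by omega) 2,
          -f x ≤ pucciPlus n lam Lam (hess n u x) + b x * gradNorm n u x) →
        (∀ x ∈ flatB n (by omega : 1 ≤ n) 2, u x ≤ 0) →
        ∀ x ∈ halfBall n (by omega : 1 ≤ n) 1,
          ENNReal.ofReal (u x)
            ≤ ENNReal.ofReal C *
              (ENNReal.ofReal (sSup ((fun y => max (u y) 0) '' halfBall n (by omega) (3 / 2)))
                + LpqNormHB n (by omega) p q d0 2 (fun y => max (f y) 0)) *
              ENNReal.ofReal (lastC n (by omega) x) := by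
  have hn1 : 1 ≤ n := by omega
  have hn0 : (0 : ℝ) < n := by exact_mod_cast hn1
  have hq0 : 0 < q := hn0.trans hq
  have hLam0 : 0 < Lam := hlam.trans_le hLam
  have hω := om_pos n
  obtain ⟨i, hi⟩ : ∃ i : Fin n, i = ⟨n - 1, by omega⟩ := ⟨_, rfl⟩
  have hlast : ∀ x, lastC n hn1 x = x i := fun x => by rw [hi]; rfl
  obtain ⟨α, hα⟩ : ∃ α : ℝ, α = 1 - n / q := ⟨_, rfl⟩
  have hα0 : 0 < α := by
    rw [hα, sub_pos, div_lt_one hq0]; exact hq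
  obtain ⟨γ, hγ⟩ : ∃ γ : ℝ, γ = max (3 / 4) ((1 / 2 : ℝ) ^ α) := ⟨_, rfl⟩
  have hγ1 : γ < 1 := by
    rw [hγ]
    exact max_lt (by norm_num) (Real.rpow_lt_one (by norm_num) (by norm_num) hα0)
  have h1γ : 0 < 1 - γ := by linarith
  obtain ⟨B, hB⟩ : ∃ B : ℝ, B = n * Lam / lam := ⟨_, rfl⟩
  have hB0 : 0 < B := by rw [hB]; positivity
  obtain ⟨C₁, hC₁⟩ : ∃ C₁ : ℝ, C₁ = om n ^ (-(1 / q)) / (n * lam) := ⟨_, rfl⟩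
  have hC0 : 0 < C₁ := by rw [hC₁]; positivity
  obtain ⟨D, hD⟩ : ∃ D : ℝ, D = B / (1 - γ) + (2 + 3 * B) := ⟨_, rfl⟩
  have hD0 : 0 < D := by rw [hD]; positivity
  obtain ⟨ε, hε⟩ : ∃ ε : ℝ, ε = 1 / (32 * C₁ * (1 + D * K)) := ⟨_, rfl⟩
  have hε0 : 0 < ε := by rw [hε]; positivity
  obtain ⟨r₀, hr₀⟩ : ∃ r₀ : ℝ, r₀ = min (d0 / 2) (ε ^ (1 / α)) := ⟨_, rfl⟩
  have hr0 : 0 < r₀ := by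
    rw [hr₀]; exact lt_min (by positivity) (by positivity)
  have hrd : r₀ ≤ d0 / 2 := by rw [hr₀]; exact min_le_left _ _
  have hrε : r₀ ^ α ≤ ε := by
    have h1 : r₀ ≤ ε ^ (1 / α) := by rw [hr₀]; exact min_le_right _ _
    calc r₀ ^ α ≤ (ε ^ (1 / α)) ^ α := by gcongr
      _ = ε := by
        rw [← Real.rpow_mul hε0.le, one_div_mul_cancel hα0.ne', Real.rpow_one]
  have hsm : 8 * C₁ * (1 + D * K) * r₀ ^ α ≤ 1 / 4 := by
    calc 8 * C₁ * (1 + D * K) * r₀ ^ α ≤ 8 * C₁ * (1 + D * K) * ε := by gcongr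
      _ = 1 / 4 := by rw [hε]; field_simp; norm_num
  refine ⟨(B / (1 - γ) + 2) / r₀, by positivity, ?_⟩
  intro b f u hb hf hb0 hbK huc hu2 hpde hu0 x hx
  obtain ⟨S, hS⟩ : ∃ S, S = sSup ((fun y => max (u y) 0) '' halfBall n hn1 (3 / 2)) := ⟨_, rfl⟩
  have hS0 : 0 ≤ S := by
    rw [hS]
    apply Real.sSup_nonneg
    rintro _ ⟨y, -, rfl⟩
    exact le_max_right _ _
  have hproj : Continuous fun y : EuclideanSpace ℝ (Fin n) => y i :=
    (EuclideanSpace.proj (𝕜 := ℝ) i).continuous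
  have hSle : ∀ y ∈ halfBall n hn1 (3 / 2), u y ≤ S := by
    intro y hy
    have hcomp : IsCompact {y : EuclideanSpace ℝ (Fin n) | ‖y‖ ≤ 3 / 2 ∧ 0 ≤ y i} := by
      refine (isCompact_closedBall (0 : EuclideanSpace ℝ (Fin n)) (3 / 2)).of_isClosed_subset
        ?_ ?_
      · exact (isClosed_le continuous_norm continuous_const).inter
          (isClosed_le continuous_const hproj)
      · intro y hy
        simpa using hy.1
    have hsub : {y : EuclideanSpace ℝ (Fin n) | ‖y‖ ≤ 3 / 2 ∧ 0 ≤ y i} ⊆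
        halfBall n hn1 2 ∪ flatB n hn1 2 := by
      rintro y ⟨h1, h2⟩
      rcases h2.eq_or_lt with h | h
      · exact Or.inr ⟨by linarith, by rw [hlast]; exact h.symm⟩
      · exact Or.inl ⟨by linarith, by rw [hlast]; exact h⟩
    have hbdd := hcomp.bddAbove_image
      (ContinuousOn.sup (huc.mono hsub) (continuousOn_const (c := (0 : ℝ))))
    have hbdd' : BddAbove ((fun y => max (u y) 0) '' halfBall n hn1 (3 / 2)) := by
      refine hbdd.mono (Set.image_mono ?_)
      rintro y ⟨h1, h2⟩
      rw [hlast] at h2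
      exact ⟨h1.le, h2.le⟩
    rw [hS]
    exact (le_max_left _ _).trans (le_csSup hbdd' ⟨y, hy, rfl⟩)
  have hx1 : ‖x‖ < 1 := hx.1
  have ht : 0 < x i := by rw [← hlast]; exact hx.2
  obtain ⟨N, hN⟩ : ∃ N, N = LpNormE n q (fun y => max (f y) 0)
    {x ∈ halfBall n hn1 2 | lastC n hn1 x < d0} := ⟨_, rfl⟩
  have hNle : N ≤ LpqNormHB n hn1 p q d0 2 (fun y => max (f y) 0) := by
    rw [hN]; exact le_add_self
  have hCpos : 0 < (B / (1 - γ) + 2) / r₀ := by positivity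
  rw [hlast, ← hS]
  by_cases hNtop : N = ⊤
  · have h1 : LpqNormHB n hn1 p q d0 2 (fun y => max (f y) 0) = ⊤ := by
      rw [hNtop] at hNle; exact top_le_iff.mp hNle
    rw [h1, add_top, ENNReal.mul_top (by simpa using hCpos), ENNReal.top_mul (by simpa using ht)]
    exact le_top
  obtain ⟨F, hF⟩ : ∃ F, F = N.toReal := ⟨_, rfl⟩
  have hF0 : 0 ≤ F := by rw [hF]; exact ENNReal.toReal_nonneg
  have hNF : N = ENNReal.ofReal F := by rw [hF, ENNReal.ofReal_toReal hNtop]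
  suffices hmain : u x ≤ (B / (1 - γ) + 2) / r₀ * (S + F) * x i by
    calc ENNReal.ofReal (u x) ≤ ENNReal.ofReal ((B / (1 - γ) + 2) / r₀ * (S + F) * x i) :=
          ENNReal.ofReal_le_ofReal hmain
      _ = ENNReal.ofReal ((B / (1 - γ) + 2) / r₀) * (ENNReal.ofReal S + N)
          * ENNReal.ofReal (x i) := by
        rw [hNF, ENNReal.ofReal_mul (by positivity), ENNReal.ofReal_mul (by positivity),
          ENNReal.ofReal_add hS0 hF0]
      _ ≤ _ := by gcongr
  have hBγ : 0 < B / (1 - γ) := by positivity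
  by_cases hbig : r₀ ≤ x i
  · have h1 : u x ≤ S := hSle x ⟨by linarith, hx.2⟩
    have h2 : S + F ≤ (S + F) * (x i / r₀) :=
      le_mul_of_one_le_right (by positivity) (by rw [le_div_iff₀ hr0]; linarith)
    have h3 : 0 ≤ (S + F) * (x i / r₀) := by positivity
    have h4 : (B / (1 - γ) + 2) / r₀ * (S + F) * x i
        = (B / (1 - γ) + 2) * ((S + F) * (x i / r₀)) := by ring
    rw [h4]
    have h5 := mul_nonneg hBγ.le h3
    rw [add_mul]
    linarith
  push Not at hbig
  obtain ⟨x₀, hx₀⟩ : ∃ x₀, x₀ = x - EuclideanSpace.single i (x i) := ⟨_, rfl⟩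
  have hx₀i : x₀ i = 0 := by simp [hx₀]
  have hxx₀ : ‖x - x₀‖ = x i := by
    rw [hx₀]; simp [abs_of_pos ht]
  have hx₀n : ‖x₀‖ ≤ 9 / 8 := by
    have h1 : x₀ = x - (x - x₀) := by abel
    rw [h1]
    refine (norm_sub_le _ _).trans ?_
    linarith
  have hnear : ∀ y, ‖y - x₀‖ ≤ r₀ → ‖y‖ ≤ 5 / 4 := by
    intro y hy
    have h1 : y = (y - x₀) + x₀ := by abel
    rw [h1]
    refine (norm_add_le _ _).trans ?_
    linarith
  obtain ⟨σ, hσ⟩ : ∃ σ, σ = S / r₀ + F := ⟨_, rfl⟩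
  have hσ0 : 0 ≤ σ := by rw [hσ]; positivity
  have hsub : {y : EuclideanSpace ℝ (Fin n) | ‖y - x₀‖ < r₀ ∧ 0 < y i} ⊆ halfBall n hn1 2 := by
    rintro y ⟨h1, h2⟩
    have := hnear y h1.le
    exact ⟨by linarith, by rw [hlast]; exact h2⟩
  have hsubd : {y : EuclideanSpace ℝ (Fin n) | ‖y - x₀‖ < r₀ ∧ 0 < y i} ⊆
      {x ∈ halfBall n hn1 2 | lastC n hn1 x < d0} := by
    intro y hy
    refine ⟨hsub hy, ?_⟩
    rw [hlast]
    have := coord_le i (y - x₀)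
    simp [hx₀i] at this
    linarith [le_abs_self (y i), hy.1]
  have hsubK : {y : EuclideanSpace ℝ (Fin n) | ‖y - x₀‖ ≤ r₀ ∧ 0 ≤ y i} ⊆
      halfBall n hn1 2 ∪ flatB n hn1 2 := by
    rintro y ⟨h1, h2⟩
    have := hnear y h1
    rcases h2.eq_or_lt with h | h
    · exact Or.inr ⟨by linarith, by rw [hlast]; exact h.symm⟩
    · exact Or.inl ⟨by linarith, by rw [hlast]; exact h⟩
  have hfl : ∀ y ∈ {y : EuclideanSpace ℝ (Fin n) | ‖y - x₀‖ ≤ r₀ ∧ 0 ≤ y i},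
      y i = 0 → u y ≤ 0 := by
    rintro y ⟨h1, -⟩ h2
    have := hnear y h1
    exact hu0 y ⟨by linarith, by rw [hlast]; exact h2⟩
  have hit := iter hn1 i (r₀ := r₀) (F := F) (K := K) (σ := σ) hlam hLam hq hr0 hF0 hK.le hC₁ hB hγ1
    (by rw [hγ]; exact le_max_left _ _) (by rw [← hα, hγ]; exact le_max_right _ _) hD
    (by rw [← hα]; exact hsm) (by rw [hσ]; exact le_add_of_nonneg_left (by positivity))
    hx₀i rfl rfl (hb.mono hsub) (hf.mono hsub) (fun y hy => hb0 y (hsub hy))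
    (by
      rw [← hNF, hN, LpNormE_eq hq0.le]
      exact eLpNorm'_mono_measure _ (Measure.restrict_mono hsubd le_rfl) hq0.le)
    (by
      rw [LpNormE_eq hq0.le] at hbK
      exact (eLpNorm'_mono_measure _ (Measure.restrict_mono hsub le_rfl) hq0.le).trans hbK)
    (huc.mono hsubK) (hu2.mono hsub) (fun y hy => hpde y (hsub hy)) hfl
    (by
      rintro y hy
      have hSσ : S ≤ σ * r₀ := by
        have : σ * r₀ = S + F * r₀ := by rw [hσ]; field_simp
        rw [this]
        exact le_add_of_nonneg_right (by positivity)
      rcases hy.2.eq_or_lt with h | h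
      · exact (hfl y hy h.symm).trans (by positivity)
      · have := hnear y hy.1
        exact (hSle y ⟨by linarith, by rw [hlast]; exact h⟩).trans hSσ)
  obtain ⟨k, hk1, hk2⟩ := exists_nat_pow_near_of_lt_one (x := x i / r₀) (y := (1 / 2 : ℝ))
    (by positivity) (by rw [div_le_one hr0]; exact hbig.le) (by norm_num) (by norm_num)
  rw [lt_div_iff₀ hr0] at hk1
  rw [div_le_iff₀ hr0] at hk2
  have hux := hit k x (by rw [hxx₀]; linarith) ht.le
  have hγ0 : 0 < γ := by rw [hγ]; exact lt_max_of_lt_left (by norm_num)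
  have hgeom : ∑ j ∈ Finset.range k, γ ^ j ≤ 1 / (1 - γ) := by
    rw [geom_sum_eq hγ1.ne, ← neg_div_neg_eq]
    have : 0 ≤ γ ^ k := by positivity
    gcongr <;> linarith
  have hγk : γ ^ k ≤ 1 := pow_le_one₀ hγ0.le hγ1.le
  have hr2 : r₀ * (1 / 2) ^ k ≤ 2 * x i := by
    rw [pow_succ] at hk1; linarith
  have hσle : σ ≤ (S + F) / r₀ := by
    rw [hσ, add_div]
    have : F ≤ F / r₀ := by
      rw [le_div_iff₀ hr0]
      exact mul_le_of_le_one_right hF0 (by linarith)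
    linarith
  calc u x ≤ _ := hux
    _ ≤ (B * σ * (1 / (1 - γ))) * x i + σ * 1 * (2 * x i) := by gcongr
    _ = (B / (1 - γ) + 2) * σ * x i := by ring
    _ ≤ (B / (1 - γ) + 2) * ((S + F) / r₀) * x i := by gcongr
    _ = _ := by ring
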